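/- Let α ≥ 0 and let A = [a_{j,p}] and B = [b_{r,k}] be doubly infinite complex matrices (indexed by ℤ×ℤ) with finite Sobolev norms ‖A‖_α² = Σ_{j,p} (1+j²+p²)^α |a_{j,p}|² and similarly for B. Then the matrix product AB = [Σ_p a_{j,p} b_{p,k}] is well-defined, has finite α-norm, and ‖AB‖_α ≤ ‖A‖_α · ‖B‖_α. -/

import Mathlib

open scoped ComplexConjugate

/-- The Sobolev α-weight on ℤ². -/
noncomputable def sobolevWeight (α : ℝ) (k l : ℤ) : ℝ := (1 + (k:ℝ)^2 + (l:ℝ)^2) ^ α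

/-!
The weight is submultiplicative through any middle index `p`, because
`1 + j² + k² ≤ (1 + j² + p²) (1 + p² + k²)`. The Cauchy–Schwarz inequality for `∑ₚ a_{j,p} b_{p,k}`
therefore bounds the weighted square of the `(j, k)` entry of `AB` by the product of the `j`-th
weighted row sum of `A` and the `k`-th weighted column sum of `B`, and summing over `(j, k)`
factors.
-/

section CauchySchwarz

variable {ι : Type*} {r f g : ι → ℝ}

theorem summable_of_sq_le_mul (hf₀ : ∀ i, 0 ≤ f i) (hg₀ : ∀ i, 0 ≤ g i)
    (hr : ∀ i, r i ^ 2 ≤ f i * g i) (hf : Summable f) (hg : Summable g) : Summable r := by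
  refine (hf.add hg).of_norm_bounded fun i => abs_le_of_sq_le_sq ?_ (add_nonneg (hf₀ i) (hg₀ i))
  nlinarith [hr i, hf₀ i, hg₀ i, mul_nonneg (hf₀ i) (hg₀ i)]

theorem sq_tsum_le_tsum_mul_tsum_of_sq_le_mul (hf₀ : ∀ i, 0 ≤ f i) (hg₀ : ∀ i, 0 ≤ g i)
    (hr : ∀ i, r i ^ 2 ≤ f i * g i) (hf : Summable f) (hg : Summable g) :
    (∑' i, r i) ^ 2 ≤ (∑' i, f i) * ∑' i, g i :=
  le_of_tendsto_of_tendsto'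
    ((summable_of_sq_le_mul hf₀ hg₀ hr hf hg).hasSum.pow 2)
    (Filter.Tendsto.mul hf.hasSum hg.hasSum)
    fun s => s.sum_sq_le_sum_mul_sum_of_sq_le_mul (fun i _ => hf₀ i) (fun i _ => hg₀ i)
      fun i _ => hr i

end CauchySchwarz

section RowColumnSums

variable {l m n : Type*} {F : l → m → ℝ} {G : m → n → ℝ} {H : l → n → ℝ}

theorem hasSum_tsum_row_mul_tsum_col (hF₀ : ∀ i p, 0 ≤ F i p) (hG₀ : ∀ p k, 0 ≤ G p k)
    (hF : Summable fun ip : l × m => F ip.1 ip.2) (hG : Summable fun pk : m × n => G pk.1 pk.2) :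
    HasSum (fun ik : l × n => (∑' p, F ik.1 p) * ∑' p, G p ik.2)
      ((∑' ip : l × m, F ip.1 ip.2) * ∑' pk : m × n, G pk.1 pk.2) := by
  have hrow : HasSum (fun i => ∑' p, F i p) (∑' ip : l × m, F ip.1 ip.2) :=
    hF.tsum_prod ▸ hF.prod.hasSum
  have hcol : HasSum (fun k => ∑' p, G p k) (∑' pk : m × n, G pk.1 pk.2) :=
    hG.tsum_prod.trans hG.tsum_comm.symm ▸ hG.prod_symm.prod.hasSum
  exact hrow.mul hcol <| hrow.summable.mul_of_nonneg hcol.summable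
    (fun i => tsum_nonneg (hF₀ i)) (fun k => tsum_nonneg fun p => hG₀ p k)

theorem summable_of_le_tsum_row_mul_tsum_col (hF₀ : ∀ i p, 0 ≤ F i p) (hG₀ : ∀ p k, 0 ≤ G p k)
    (hH₀ : ∀ i k, 0 ≤ H i k) (hH : ∀ i k, H i k ≤ (∑' p, F i p) * ∑' p, G p k)
    (hF : Summable fun ip : l × m => F ip.1 ip.2) (hG : Summable fun pk : m × n => G pk.1 pk.2) :
    Summable fun ik : l × n => H ik.1 ik.2 :=
  (hasSum_tsum_row_mul_tsum_col hF₀ hG₀ hF hG).summable.of_nonneg_of_le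
    (fun ik => hH₀ ik.1 ik.2) (fun ik => hH ik.1 ik.2)

theorem tsum_le_tsum_mul_tsum_of_le_tsum_row_mul_tsum_col (hF₀ : ∀ i p, 0 ≤ F i p)
    (hG₀ : ∀ p k, 0 ≤ G p k) (hH₀ : ∀ i k, 0 ≤ H i k)
    (hH : ∀ i k, H i k ≤ (∑' p, F i p) * ∑' p, G p k)
    (hF : Summable fun ip : l × m => F ip.1 ip.2) (hG : Summable fun pk : m × n => G pk.1 pk.2) :
    ∑' ik : l × n, H ik.1 ik.2 ≤ (∑' ip : l × m, F ip.1 ip.2) * ∑' pk : m × n, G pk.1 pk.2 :=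
  have hFG := hasSum_tsum_row_mul_tsum_col hF₀ hG₀ hF hG
  hFG.tsum_eq ▸ (summable_of_le_tsum_row_mul_tsum_col hF₀ hG₀ hH₀ hH hF hG).tsum_le_tsum
    (fun ik => hH ik.1 ik.2) hFG.summable

end RowColumnSums

section WeightedProduct

variable {R : Type*} [NonUnitalSeminormedRing R]

theorem sq_norm_mul_le_of_le_mul {c s t : ℝ} (hc : 0 < c) (hcst : c ≤ s * t) (x y : R) :
    ‖x * y‖ ^ 2 ≤ c⁻¹ * (s * ‖x‖ ^ 2) * (t * ‖y‖ ^ 2) :=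
  calc
    ‖x * y‖ ^ 2 ≤ (‖x‖ * ‖y‖) ^ 2 := by gcongr; exact norm_mul_le x y
    _ = c⁻¹ * c * (‖x‖ * ‖y‖) ^ 2 := by rw [inv_mul_cancel₀ hc.ne', one_mul]
    _ ≤ c⁻¹ * (s * t) * (‖x‖ * ‖y‖) ^ 2 := by gcongr
    _ = c⁻¹ * (s * ‖x‖ ^ 2) * (t * ‖y‖ ^ 2) := by ring

section Series

variable {m : Type*} {c : ℝ} {u v : m → ℝ} {a b : m → R}

theorem summable_norm_mul_of_le_mul (hc : 0 < c) (hu : ∀ p, 0 ≤ u p) (hv : ∀ p, 0 ≤ v p)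
    (hcuv : ∀ p, c ≤ u p * v p) (ha : Summable fun p => u p * ‖a p‖ ^ 2)
    (hb : Summable fun p => v p * ‖b p‖ ^ 2) : Summable fun p => ‖a p * b p‖ :=
  summable_of_sq_le_mul
    (fun p => mul_nonneg (inv_nonneg.2 hc.le) (mul_nonneg (hu p) (sq_nonneg _)))
    (fun p => mul_nonneg (hv p) (sq_nonneg _))
    (fun p => sq_norm_mul_le_of_le_mul hc (hcuv p) (a p) (b p)) (ha.mul_left c⁻¹) hb

theorem mul_sq_norm_tsum_mul_le (hc : 0 < c) (hu : ∀ p, 0 ≤ u p) (hv : ∀ p, 0 ≤ v p)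
    (hcuv : ∀ p, c ≤ u p * v p) (ha : Summable fun p => u p * ‖a p‖ ^ 2)
    (hb : Summable fun p => v p * ‖b p‖ ^ 2) :
    c * ‖∑' p, a p * b p‖ ^ 2 ≤ (∑' p, u p * ‖a p‖ ^ 2) * ∑' p, v p * ‖b p‖ ^ 2 := by
  have hab : Summable fun p => ‖a p * b p‖ := summable_norm_mul_of_le_mul hc hu hv hcuv ha hb
  have cauchy_schwarz : (∑' p, ‖a p * b p‖) ^ 2 ≤
      (∑' p, c⁻¹ * (u p * ‖a p‖ ^ 2)) * ∑' p, v p * ‖b p‖ ^ 2 :=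
    sq_tsum_le_tsum_mul_tsum_of_sq_le_mul
      (fun p => mul_nonneg (inv_nonneg.2 hc.le) (mul_nonneg (hu p) (sq_nonneg _)))
      (fun p => mul_nonneg (hv p) (sq_nonneg _))
      (fun p => sq_norm_mul_le_of_le_mul hc (hcuv p) (a p) (b p)) (ha.mul_left c⁻¹) hb
  rw [tsum_mul_left, mul_assoc, ← div_eq_inv_mul, le_div_iff₀' hc] at cauchy_schwarz
  calc
    c * ‖∑' p, a p * b p‖ ^ 2 ≤ c * (∑' p, ‖a p * b p‖) ^ 2 := by
      gcongr; exact norm_tsum_le_tsum_norm hab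
    _ ≤ (∑' p, u p * ‖a p‖ ^ 2) * ∑' p, v p * ‖b p‖ ^ 2 := cauchy_schwarz

end Series

theorem sobolev_norm_submultiplicative_general [CompleteSpace R] {l m n : Type*}
    {u : l → m → ℝ} {v : m → n → ℝ} {w : l → n → ℝ} (hu : ∀ i p, 0 ≤ u i p)
    (hv : ∀ p k, 0 ≤ v p k) (hw : ∀ i k, 0 < w i k) (hwuv : ∀ i p k, w i k ≤ u i p * v p k)
    {A : l → m → R} {B : m → n → R}
    (hA : Summable fun ip : l × m => u ip.1 ip.2 * ‖A ip.1 ip.2‖ ^ 2)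
    (hB : Summable fun pk : m × n => v pk.1 pk.2 * ‖B pk.1 pk.2‖ ^ 2) :
    (∀ i k, Summable fun p => A i p * B p k) ∧
    Summable (fun ik : l × n => w ik.1 ik.2 * ‖∑' p, A ik.1 p * B p ik.2‖ ^ 2) ∧
    √(∑' ik : l × n, w ik.1 ik.2 * ‖∑' p, A ik.1 p * B p ik.2‖ ^ 2) ≤
      √(∑' ip : l × m, u ip.1 ip.2 * ‖A ip.1 ip.2‖ ^ 2) *
      √(∑' pk : m × n, v pk.1 pk.2 * ‖B pk.1 pk.2‖ ^ 2) := by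
  have hA₀ : ∀ i p, 0 ≤ u i p * ‖A i p‖ ^ 2 := fun i p => mul_nonneg (hu i p) (sq_nonneg _)
  have hB₀ : ∀ p k, 0 ≤ v p k * ‖B p k‖ ^ 2 := fun p k => mul_nonneg (hv p k) (sq_nonneg _)
  have hAB₀ : ∀ i k, 0 ≤ w i k * ‖∑' p, A i p * B p k‖ ^ 2 :=
    fun i k => mul_nonneg (hw i k).le (sq_nonneg _)
  have hrow : ∀ i, Summable fun p => u i p * ‖A i p‖ ^ 2 := hA.prod_factor
  have hcol : ∀ k, Summable fun p => v p k * ‖B p k‖ ^ 2 := hB.prod_symm.prod_factor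
  have hentry : ∀ i k, w i k * ‖∑' p, A i p * B p k‖ ^ 2 ≤
      (∑' p, u i p * ‖A i p‖ ^ 2) * ∑' p, v p k * ‖B p k‖ ^ 2 := fun i k =>
    mul_sq_norm_tsum_mul_le (hw i k) (hu i) (hv · k) (hwuv i · k) (hrow i) (hcol k)
  refine ⟨fun i k => ?_, summable_of_le_tsum_row_mul_tsum_col hA₀ hB₀ hAB₀ hentry hA hB, ?_⟩
  · exact (summable_norm_mul_of_le_mul (hw i k) (hu i) (hv · k) (hwuv i · k)
      (hrow i) (hcol k)).of_norm
  · rw [← Real.sqrt_mul (tsum_nonneg fun ip : l × m => hA₀ ip.1 ip.2)]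
    exact Real.sqrt_le_sqrt <|
      tsum_le_tsum_mul_tsum_of_le_tsum_row_mul_tsum_col hA₀ hB₀ hAB₀ hentry hA hB

end WeightedProduct

theorem sobolevWeight_pos (α : ℝ) (k l : ℤ) : 0 < sobolevWeight α k l :=
  Real.rpow_pos_of_pos (by positivity) α

theorem sobolevWeight_le_mul {α : ℝ} (hα : 0 ≤ α) (j p k : ℤ) :
    sobolevWeight α j k ≤ sobolevWeight α j p * sobolevWeight α p k := by
  have base_le : 1 + (j : ℝ) ^ 2 + (k : ℝ) ^ 2 ≤
      (1 + (j : ℝ) ^ 2 + (p : ℝ) ^ 2) * (1 + (p : ℝ) ^ 2 + (k : ℝ) ^ 2) :=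
    calc
      1 + (j : ℝ) ^ 2 + (k : ℝ) ^ 2 ≤ (1 + (j : ℝ) ^ 2) * (1 + (k : ℝ) ^ 2) := by
        linarith [mul_nonneg (sq_nonneg (j : ℝ)) (sq_nonneg (k : ℝ))]
      _ ≤ (1 + (j : ℝ) ^ 2 + (p : ℝ) ^ 2) * (1 + (p : ℝ) ^ 2 + (k : ℝ) ^ 2) :=
        mul_le_mul (by linarith [sq_nonneg (p : ℝ)]) (by linarith [sq_nonneg (p : ℝ)])
          (by positivity) (by positivity)
  unfold sobolevWeight
  rw [← Real.mul_rpow (by positivity) (by positivity)]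
  exact Real.rpow_le_rpow (by positivity) base_le hα

theorem sobolev_norm_submultiplicative (α : ℝ) (hα : 0 ≤ α) (A B : ℤ → ℤ → ℂ)
    (hA : Summable fun jp : ℤ × ℤ => sobolevWeight α jp.1 jp.2 * ‖A jp.1 jp.2‖ ^ 2)
    (hB : Summable fun rk : ℤ × ℤ => sobolevWeight α rk.1 rk.2 * ‖B rk.1 rk.2‖ ^ 2) :
    (∀ j k : ℤ, Summable fun p : ℤ => A j p * B p k) ∧
    Summable (fun jk : ℤ × ℤ =>
      sobolevWeight α jk.1 jk.2 * ‖∑' p : ℤ, A jk.1 p * B p jk.2‖ ^ 2) ∧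
    Real.sqrt (∑' jk : ℤ × ℤ,
        sobolevWeight α jk.1 jk.2 * ‖∑' p : ℤ, A jk.1 p * B p jk.2‖ ^ 2) ≤
      Real.sqrt (∑' jp : ℤ × ℤ, sobolevWeight α jp.1 jp.2 * ‖A jp.1 jp.2‖ ^ 2) *
      Real.sqrt (∑' rk : ℤ × ℤ, sobolevWeight α rk.1 rk.2 * ‖B rk.1 rk.2‖ ^ 2) :=
  sobolev_norm_submultiplicative_general (fun j p => (sobolevWeight_pos α j p).le)
    (fun p k => (sobolevWeight_pos α p k).le) (sobolevWeight_pos α) (sobolevWeight_le_mul hα) hA hB
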